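/- Let S ⊂ ℝ^k be a halfspace and Λ' an additive subgroup of ℝ^k. Suppose A ∈ (APW^k_{Λ'∩S})^{p×m} and B ∈ (APW^k_{Λ'∩S})^{p×p}, with B invertible in (APW^k_{Λ'})^{p×p}, form a left coprime pair over APW^k_{Λ'∩S}. Then: (i) the matrix function W = B^{−1}A admits a right coprime factorization W = C D^{−1} over APW^k_{Λ'∩S}, with C ∈ (APW^k_{Λ'∩S})^{p×m}, D ∈ (APW^k_{Λ'∩S})^{m×m}, and D invertible in (APW^k_{Λ'})^{m×m}; and (ii) the kernel-range identity Ker [ T(A)_{S,Λ'} −T(B)_{S,Λ'} ] = Im [ T(D)_{S,Λ'} ; T(C)_{S,Λ'} ] holds, where the left-hand side is the kernel of the row operator (f,g) ↦ T(A)_{S,Λ'}f − T(B)_{S,Λ'}g on (B^k_{S∩Λ'})^{m×1} ⊕ (B^k_{S∩Λ'})^{p×1} and the right-hand side is the range of the column operator h ↦ (T(D)_{S,Λ'}h, T(C)_{S,Λ'}h). -/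

import Mathlib

/- Almost periodic functions of `k` real variables, their Bohr-Fourier
coefficients and spectra, the Wiener algebra, and halfspaces. -/

open MeasureTheory Filter BoundedContinuousFunction

noncomputable section

/-- The Banach algebra of bounded continuous functions `ℝ^k → ℂ` (sup norm). -/
abbrev APB (k : ℕ) := BoundedContinuousFunction (Fin k → ℝ) ℂ

/-- The elementary exponential `e_λ(x) = e^{i⟨λ,x⟩}` as a bounded continuous function. -/
def apExp (k : ℕ) (lam : Fin k → ℝ) : APB k :=
  BoundedContinuousFunction.ofNormedAddCommGroup
    (fun x => Complex.exp (Complex.I * ((∑ j, lam j * x j : ℝ) : ℂ)))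
    (by fun_prop) 1
    (fun x => by
      simp [Complex.norm_exp, Complex.mul_re])

/-- `AP^k`: the closed subalgebra of `L^∞`-type bounded continuous functions
generated by all exponentials `e_λ`, `λ ∈ ℝ^k`. -/
def APalg (k : ℕ) : Subalgebra ℂ (APB k) :=
  (Algebra.adjoin ℂ (Set.range (apExp k))).topologicalClosure

/-- The Bohr-Fourier coefficient
`f_λ = lim_{T→∞} (2T)^{-k} ∫_{[-T,T]^k} e^{-i⟨λ,x⟩} f(x) dx`. -/
def bohrCoeff (k : ℕ) (f : (Fin k → ℝ) → ℂ) (lam : Fin k → ℝ) : ℂ :=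
  limUnder atTop (fun T : ℝ =>
    (((2 * T) ^ k : ℝ) : ℂ)⁻¹ *
      ∫ x in Set.Icc (fun _ => -T : Fin k → ℝ) (fun _ => T),
        Complex.exp (-(Complex.I * ((∑ j, lam j * x j : ℝ) : ℂ))) * f x)

/-- The Bohr-Fourier spectrum `σ(f) = {λ : f_λ ≠ 0}`. -/
def bohrSpectrum (k : ℕ) (f : (Fin k → ℝ) → ℂ) : Set (Fin k → ℝ) :=
  {lam | bohrCoeff k f lam ≠ 0}

/-- Membership in `AP^k_Δ = {f ∈ AP^k : σ(f) ⊆ Δ}`. -/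
def APmem (k : ℕ) (Δ : Set (Fin k → ℝ)) (f : APB k) : Prop :=
  f ∈ APalg k ∧ bohrSpectrum k ⇑f ⊆ Δ

/-- Membership in the Wiener algebra `APW^k_Δ`: almost periodic with spectrum
in `Δ` and absolutely convergent Bohr-Fourier series. -/
def APWmem (k : ℕ) (Δ : Set (Fin k → ℝ)) (f : APB k) : Prop :=
  APmem k Δ f ∧ Summable (fun lam => ‖bohrCoeff k (⇑f) lam‖)

/-- The Wiener norm `‖f‖_W = ∑_λ |f_λ|`. -/
def wienerNorm (k : ℕ) (f : (Fin k → ℝ) → ℂ) : ℝ :=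
  ∑' lam, ‖bohrCoeff k f lam‖

/-- A halfspace `S ⊂ ℝ^k`: `ℝ^k = S ∪ (-S)`, `S ∩ (-S) = {0}`, and `S` is
closed under addition and under multiplication by nonnegative reals. -/
structure IsHalfspace (k : ℕ) (S : Set (Fin k → ℝ)) : Prop where
  union : S ∪ -S = Set.univ
  inter : S ∩ -S = {0}
  add_mem : ∀ x ∈ S, ∀ y ∈ S, x + y ∈ S
  smul_mem : ∀ x ∈ S, ∀ a : ℝ, 0 ≤ a → a • x ∈ S

/- The Besicovitch space and Toeplitz operators.  The Besicovitch space `B^k`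
is the Hilbert-space completion of `AP^k` in the inner product `⟨f,g⟩=M{f·ḡ}`;
the exponentials `e_λ` form an orthonormal basis, so `(B^k_Λ)^{n×1}` is
canonically identified (via Bohr-Fourier coefficients) with `ℓ²(Fin n × Λ)`. -/

/-- The column Besicovitch space `(B^k_Λ)^{n×1} ≅ ℓ²(Fin n × Λ)`. -/
abbrev BesCol (k n : ℕ) (Λ : Set (Fin k → ℝ)) : Type :=
  lp (fun _ : Fin n × ↥Λ => ℂ) 2

/-- `T` is the Toeplitz operator
`T(F)_{S,Λ} : (B^k_{S∩Λ})^{n×1} → (B^k_{S∩Λ})^{m×1}`, `φ ↦ Π_{S∩Λ}(Fφ)`,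
characterized by its matrix with respect to the orthonormal basis of
exponentials: `⟪e_ν δ_i , T(e_μ δ_j)⟫ = (F i j)_{ν-μ}` (Bohr-Fourier
coefficient of the `(i,j)` entry at `ν - μ`). -/
def RepresentsToeplitz (k : ℕ) (S Λ : Set (Fin k → ℝ)) (m n : ℕ)
    (F : Matrix (Fin m) (Fin n) (APB k))
    (T : BesCol k n (S ∩ Λ) →L[ℂ] BesCol k m (S ∩ Λ)) : Prop :=
  ∀ (j : Fin n) (μ : ↥(S ∩ Λ)) (i : Fin m) (ν : ↥(S ∩ Λ)),
    (inner ℂ (lp.single 2 (i, ν) (1 : ℂ)) (T (lp.single 2 (j, μ) (1 : ℂ))) : ℂ) =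
      bohrCoeff k (⇑(F i j)) ((ν : Fin k → ℝ) - (μ : Fin k → ℝ))

/-- Invertibility of a continuous linear map. -/
def CLMInvertible {E F : Type*} [NormedAddCommGroup E] [NormedAddCommGroup F]
    [NormedSpace ℂ E] [NormedSpace ℂ F] (T : E →L[ℂ] F) : Prop :=
  ∃ Tinv : F →L[ℂ] E,
    Tinv.comp T = ContinuousLinearMap.id ℂ E ∧ T.comp Tinv = ContinuousLinearMap.id ℂ F

/-!
Put `Δ = S ∩ Λ'`. Taking Bohr–Fourier coefficients identifies `APW^k_Δ` with the convolution algebra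
`ℓ¹(Δ)`; injectivity is the uniqueness of Bohr–Fourier series, seen on the Bohr compactification of
`ℝ^k`, where the Bohr mean is Haar integration.

The convex cone `S` contains no line, so any finite set of frequencies in `Δ` is positive for some
weight `w`. After truncation to finitely many frequencies, the endomorphisms `δ_μ ↦ s ^ w μ • δ_μ`,
`0 ≤ s ≤ 1`, deform a right invertible matrix through right invertible matrices to its constant
term. Nearby right invertible matrices are column equivalent, and so are right invertible matrices
of the same size over `ℂ`; hence this holds over `ℓ¹(Δ)` too. In particular `[A  -B]` is column
equivalent to `[0  1]`, that is, it is the lower row of an invertible block matrix: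
`[X Y; A -B] * [D P; C Q] = 1`.

Reading off blocks gives `X D + Y C = 1`, `A D = B C` and `D⁻¹ = X + Y B⁻¹ A`. On `ℓ²(Δ)` the
Toeplitz operators with symbols in `ℓ¹(Δ)` compose like their symbols, because these symbols are
analytic. So the block identities also hold for the operators, and `T(A) f = T(B) g` forces
`f = T(D) h` and `g = T(C) h` for `h = T(X) f + T(Y) g`.
-/

section Pullback

variable {α β : Type*} {p : ENNReal} {g : α → β}

theorem memℓp_comp_of_injective (hg : Function.Injective g) {f : β → ℂ} (hf : Memℓp f p) :
    Memℓp (f ∘ g) p := by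
  rcases p.trichotomy with rfl | rfl | hp
  · exact memℓp_zero ((memℓp_zero_iff.1 hf).preimage hg.injOn)
  · exact memℓp_infty ((memℓp_infty_iff.1 hf).mono (Set.range_comp_subset_range g fun i => ‖f i‖))
  · exact memℓp_gen ((hf.summable hp).comp_injective hg)

/-- The pullback `f ↦ f ∘ g` of `ℓᵖ` sequences along an injective map `g`. -/
def lpPullback [Fact (1 ≤ p)] (hp : p ≠ ⊤) (hg : Function.Injective g) :
    lp (fun _ : β => ℂ) p →L[ℂ] lp (fun _ : α => ℂ) p :=
  LinearMap.mkContinuous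
    { toFun := fun f => ⟨f ∘ g, memℓp_comp_of_injective hg (lp.memℓp f)⟩
      map_add' := fun _ _ => rfl
      map_smul' := fun _ _ => rfl }
    1 fun f => by
      have hp' : 0 < p.toReal := ENNReal.toReal_pos (zero_lt_one.trans_le Fact.out).ne' hp
      rw [one_mul]
      refine (Real.rpow_le_rpow_iff (norm_nonneg _) (norm_nonneg _) hp').1 ?_
      rw [lp.norm_rpow_eq_tsum hp', lp.norm_rpow_eq_tsum hp' f]
      exact tsum_comp_le_tsum_of_inj ((lp.memℓp f).summable hp') (fun _ => by positivity) hg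

variable [Fact (1 ≤ p)] {hp : p ≠ ⊤} {hg : Function.Injective g}

@[simp]
theorem lpPullback_apply (f : lp (fun _ : β => ℂ) p) (i : α) : lpPullback hp hg f i = f (g i) := rfl

theorem norm_lpPullback_le : ‖lpPullback hp hg‖ ≤ 1 :=
  LinearMap.mkContinuous_norm_le _ zero_le_one _

theorem lpPullback_single [DecidableEq α] [DecidableEq β] (i : α) :
    lpPullback hp hg (lp.single p (g i) 1) = lp.single p i 1 := by
  ext j
  simp [Pi.single_apply, hg.eq_iff]

end Pullback

/-- The space `ℓ¹(M)`, to be equipped with the convolution product. -/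
def EllOne (M : Type*) : Type _ := lp (fun _ : M => ℂ) 1

namespace EllOne

section Module

variable {M : Type*}

instance : NormedAddCommGroup (EllOne M) :=
  inferInstanceAs (NormedAddCommGroup (lp (fun _ : M => ℂ) 1))

instance : NormedSpace ℂ (EllOne M) := inferInstanceAs (NormedSpace ℂ (lp (fun _ : M => ℂ) 1))

instance : CompleteSpace (EllOne M) := inferInstanceAs (CompleteSpace (lp (fun _ : M => ℂ) 1))

/-- The coefficients of an element of `ℓ¹(M)`. -/
def coeff (c : EllOne M) : M → ℂ := c.1

instance : CoeFun (EllOne M) (fun _ => M → ℂ) := ⟨coeff⟩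

theorem ext {c d : EllOne M} (h : ∀ μ, c μ = d μ) : c = d := Subtype.ext (funext h)

open Classical in
/-- The basis vector of `ℓ¹(M)` at `μ`, the analogue of the monomial `X ^ μ`. -/
def delta (μ : M) : EllOne M := lp.single 1 μ 1

open Classical in
theorem delta_apply (μ ν : M) : delta μ ν = if ν = μ then 1 else 0 :=
  Pi.single_apply μ (1 : ℂ) ν

@[simp]
theorem norm_delta (μ : M) : ‖delta μ‖ = 1 := by
  classical
  exact (lp.norm_single (E := fun _ : M => ℂ) zero_lt_one μ (1 : ℂ)).trans norm_one

theorem hasSum_norm (c : EllOne M) : HasSum (fun μ => ‖c μ‖) ‖c‖ := by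
  have := lp.hasSum_norm (p := 1) (by simp) c
  simp only [ENNReal.toReal_one, Real.rpow_one] at this
  exact this

/-- An absolutely summable family as an element of `ℓ¹(M)`. -/
def ofSummable (c : M → ℂ) (hc : Summable fun μ => ‖c μ‖) : EllOne M :=
  ⟨c, memℓp_gen (by simpa using hc)⟩

theorem hasSum_delta (c : EllOne M) : HasSum (fun μ => c μ • delta μ) c := by
  classical
  have hsingle (μ : M) : c μ • delta μ = lp.single (E := fun _ : M => ℂ) 1 μ (c μ) :=
    (lp.single_smul (E := fun _ : M => ℂ) 1 μ (c μ) (1 : ℂ)).symm.trans (by simp)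
  simp only [hsingle]
  exact lp.hasSum_single (p := 1) ENNReal.one_ne_top c

variable {E : Type*} [NormedAddCommGroup E] [NormedSpace ℂ E]

theorem clm_ext {S T : EllOne M →L[ℂ] E} (h : ∀ μ, S (delta μ) = T (delta μ)) : S = T := by
  ext c
  have hS := S.hasSum (hasSum_delta c)
  have hT := T.hasSum (hasSum_delta c)
  simp only [map_smul, h] at hS hT
  exact hS.unique hT

variable [CompleteSpace E]

theorem summable_smul {x : M → E} (hx : ∀ μ, ‖x μ‖ ≤ 1) (c : EllOne M) :
    Summable fun μ => c μ • x μ :=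
  .of_norm_bounded (hasSum_norm c).summable fun μ => by
    rw [norm_smul]
    exact mul_le_of_le_one_right (norm_nonneg _) (hx μ)

/-- The universal property of `ℓ¹(M)`: a family in the unit ball of a Banach space extends to
a contraction. -/
def lift (x : M → E) (hx : ∀ μ, ‖x μ‖ ≤ 1) : EllOne M →L[ℂ] E :=
  LinearMap.mkContinuous
    { toFun := fun c => ∑' μ, c μ • x μ
      map_add' := fun c d => by
        rw [← (summable_smul hx c).tsum_add (summable_smul hx d)]
        exact tsum_congr fun μ => add_smul _ _ _
      map_smul' := fun a c => by
        rw [RingHom.id_apply, ← (summable_smul hx c).tsum_const_smul a]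
        exact tsum_congr fun μ => mul_smul a (c μ) (x μ) }
    1 fun c => by
      rw [one_mul]
      refine tsum_of_norm_bounded (hasSum_norm c) fun μ => ?_
      rw [norm_smul]
      exact mul_le_of_le_one_right (norm_nonneg _) (hx μ)

variable (x : M → E) (hx : ∀ μ, ‖x μ‖ ≤ 1)

theorem lift_apply (c : EllOne M) : lift x hx c = ∑' μ, c μ • x μ := rfl

@[simp]
theorem lift_delta (μ : M) : lift x hx (delta μ) = x μ := by
  classical
  rw [lift_apply, tsum_eq_single μ fun ν hν => by rw [delta_apply, if_neg hν, zero_smul],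
    delta_apply, if_pos rfl, one_smul]

theorem norm_lift_le : ‖lift x hx‖ ≤ 1 := LinearMap.mkContinuous_norm_le _ zero_le_one _

end Module

section Ring

variable {M : Type*} [AddCommMonoid M]

/-- Convolution on `ℓ¹(M)` as a bounded bilinear map. -/
def mulCLM : EllOne M →L[ℂ] EllOne M →L[ℂ] EllOne M :=
  lift (fun μ => lift (fun ν => delta (μ + ν)) fun _ => (norm_delta _).le)
    fun _ => norm_lift_le _ _

@[simp]
theorem mulCLM_delta (μ ν : M) : mulCLM (delta μ) (delta ν) = delta (μ + ν) := by
  simp [mulCLM]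

theorem mulCLM_comm (a b : EllOne M) : mulCLM a b = mulCLM b a := by
  have : (mulCLM : EllOne M →L[ℂ] _) = mulCLM.flip :=
    clm_ext fun μ => clm_ext fun ν => by simp [add_comm]
  exact congr($this a b)

theorem mulCLM_assoc (a b c : EllOne M) : mulCLM (mulCLM a b) c = mulCLM a (mulCLM b c) := by
  have h₁ (μ ν : M) (c : EllOne M) :
      mulCLM (delta (μ + ν)) c = mulCLM (delta μ) (mulCLM (delta ν) c) := by
    have : mulCLM (delta (μ + ν)) = (mulCLM (delta μ)).comp (mulCLM (delta ν)) :=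
      clm_ext fun ξ => by simp [add_assoc]
    exact congr($this c)
  have h₂ (μ : M) (b c : EllOne M) :
      mulCLM (mulCLM (delta μ) b) c = mulCLM (delta μ) (mulCLM b c) := by
    have : (mulCLM.flip c).comp (mulCLM (delta μ)) = (mulCLM (delta μ)).comp (mulCLM.flip c) :=
      clm_ext fun ν => by simp [h₁]
    exact congr($this b)
  have : (mulCLM.flip c).comp (mulCLM.flip b) = mulCLM.flip (mulCLM b c) :=
    clm_ext fun μ => by simp [h₂]
  exact congr($this a)

theorem mulCLM_delta_zero (a : EllOne M) : mulCLM (delta 0) a = a := by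
  have : mulCLM (delta (0 : M)) = ContinuousLinearMap.id ℂ _ := clm_ext fun μ => by simp
  exact congr($this a)

instance : NormedCommRing (EllOne M) where
  __ := (inferInstance : NormedAddCommGroup (EllOne M))
  mul a b := mulCLM a b
  one := delta 0
  left_distrib a b c := map_add (mulCLM a) b c
  right_distrib a b c := congr($(map_add mulCLM a b) c)
  zero_mul a := congr($(map_zero mulCLM) a)
  mul_zero a := map_zero (mulCLM a)
  mul_assoc := mulCLM_assoc
  one_mul := mulCLM_delta_zero
  mul_one a := (mulCLM_comm _ _).trans (mulCLM_delta_zero a)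
  mul_comm := mulCLM_comm
  norm_mul_le a b := (mulCLM a).le_of_opNorm_le
    (by simpa using mulCLM.le_of_opNorm_le (norm_lift_le _ _) a) b

theorem mul_def (a b : EllOne M) : a * b = mulCLM a b := rfl

theorem one_def : (1 : EllOne M) = delta 0 := rfl

@[simp]
theorem delta_mul_delta (μ ν : M) : delta μ * delta ν = delta (μ + ν) := mulCLM_delta μ ν

instance : NormedAlgebra ℂ (EllOne M) where
  __ := Algebra.ofModule (fun r a b => show mulCLM (r • a) b = r • mulCLM a b by
    rw [map_smul]; rfl)
    fun r a b => map_smul (mulCLM a) r b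
  norm_smul_le := norm_smul_le

variable {B : Type*} [NormedRing B] [NormedAlgebra ℂ B]

theorem hom_ext {S T : EllOne M →A[ℂ] B} (h : ∀ μ, S (delta μ) = T (delta μ)) : S = T :=
  ContinuousAlgHom.ext fun c =>
    congr($(clm_ext (S := S.toContinuousLinearMap) (T := T.toContinuousLinearMap) h) c)

variable [CompleteSpace B]

theorem lift_mul {x : M → B} (hx : ∀ μ, ‖x μ‖ ≤ 1) (hadd : ∀ μ ν, x (μ + ν) = x μ * x ν)
    (a b : EllOne M) : lift x hx (a * b) = lift x hx a * lift x hx b := by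
  have h (μ : M) (b : EllOne M) : lift x hx (delta μ * b) = x μ * lift x hx b := by
    have : (lift x hx).comp (mulCLM (delta μ)) =
        (ContinuousLinearMap.mul ℂ B (x μ)).comp (lift x hx) :=
      clm_ext fun ν => by simp [hadd]
    exact congr($this b)
  have : (lift x hx).comp (mulCLM.flip b) =
      ((ContinuousLinearMap.mul ℂ B).flip (lift x hx b)).comp (lift x hx) :=
    clm_ext fun μ => by simpa [← mul_def] using h μ b
  exact congr($this a)

variable (x : Multiplicative M →* B) (hx : ∀ μ : M, ‖x (.ofAdd μ)‖ ≤ 1)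

/-- The universal property of `ℓ¹(M)` as a Banach algebra: a contractive representation of `M`
extends to a representation of `ℓ¹(M)`. -/
def liftHom : EllOne M →A[ℂ] B where
  __ := AlgHom.ofLinearMap (lift (fun μ => x (.ofAdd μ)) hx).toLinearMap
    ((lift_delta _ hx 0).trans (map_one x)) (lift_mul hx fun _ _ => map_mul x _ _)
  cont := (lift (fun μ => x (.ofAdd μ)) hx).cont

@[simp]
theorem liftHom_delta (μ : M) : liftHom x hx (delta μ) = x (.ofAdd μ) := lift_delta _ hx μ

end Ring

end EllOne

section ColEquiv

variable {n p R R' : Type*} [Fintype n] [DecidableEq n]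

/-- Column equivalence of matrices: they differ by an invertible right factor. -/
def ColEquiv [Semiring R] (A B : Matrix p n R) : Prop := ∃ U : (Matrix n n R)ˣ, A * U.1 = B

theorem ColEquiv.symm [Semiring R] {A B : Matrix p n R} (h : ColEquiv A B) : ColEquiv B A := by
  obtain ⟨U, rfl⟩ := h
  exact ⟨U⁻¹, by rw [Matrix.mul_assoc, U.mul_inv, Matrix.mul_one]⟩

theorem ColEquiv.trans [Semiring R] {A B C : Matrix p n R} (h : ColEquiv A B) (h' : ColEquiv B C) :
    ColEquiv A C := by
  obtain ⟨U, rfl⟩ := h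
  obtain ⟨V, rfl⟩ := h'
  exact ⟨U * V, (Matrix.mul_assoc _ _ _).symm⟩

theorem ColEquiv.map [Semiring R] [Semiring R'] {A B : Matrix p n R} (h : ColEquiv A B)
    (f : R →+* R') : ColEquiv (A.map f) (B.map f) := by
  obtain ⟨U, rfl⟩ := h
  exact ⟨U.map f.mapMatrix.toMonoidHom, Matrix.map_mul.symm⟩

theorem exists_linearEquiv_comp_eq_of_surjective {K V W : Type*} [Field K] [AddCommGroup V]
    [Module K V] [FiniteDimensional K V] [AddCommGroup W] [Module K W] {f g : V →ₗ[K] W}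
    (hf : Function.Surjective f) (hg : Function.Surjective g) :
    ∃ e : V ≃ₗ[K] V, f ∘ₗ e.toLinearMap = g := by
  obtain ⟨s, hs⟩ := f.exists_rightInverse_of_surjective (LinearMap.range_eq_top.2 hf)
  obtain ⟨t, ht⟩ := g.exists_rightInverse_of_surjective (LinearMap.range_eq_top.2 hg)
  replace hs (w : W) : f (s w) = w := LinearMap.congr_fun hs w
  replace ht (w : W) : g (t w) = w := LinearMap.congr_fun ht w
  have hker : Module.finrank K g.ker = Module.finrank K f.ker := by
    have hf' := f.finrank_range_add_finrank_ker
    have hg' := g.finrank_range_add_finrank_ker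
    rw [LinearMap.range_eq_top.2 hf] at hf'
    rw [LinearMap.range_eq_top.2 hg] at hg'
    lia
  let e₀ : g.ker ≃ₗ[K] f.ker := LinearEquiv.ofFinrankEq _ _ hker
  let π : V →ₗ[K] g.ker := (LinearMap.id - t ∘ₗ g).codRestrict g.ker fun v => by simp [ht]
  let e : V →ₗ[K] V := f.ker.subtype ∘ₗ e₀.toLinearMap ∘ₗ π + s ∘ₗ g
  have hfe (v : V) : f (e v) = g v := by
    simp [e, hs, LinearMap.mem_ker.1 (e₀ (π v)).2]
  have he : Function.Injective e := (injective_iff_map_eq_zero e).2 fun v hv => by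
    have hgv : g v = 0 := by rw [← hfe, hv, map_zero]
    have hπ : π v = 0 := by simpa [e, hgv] using hv
    simpa [π, hgv] using congrArg Subtype.val hπ
  exact ⟨LinearEquiv.ofInjectiveEndo e he, LinearMap.ext hfe⟩

theorem colEquiv_of_mul_eq_one {K : Type*} [Field K] [Finite p] [DecidableEq p]
    {A B : Matrix p n K} {N N' : Matrix n p K} (hA : A * N = 1) (hB : B * N' = 1) :
    ColEquiv A B := by
  cases nonempty_fintype p
  have hsurj {A : Matrix p n K} {N : Matrix n p K} (h : A * N = 1) :
      Function.Surjective (Matrix.toLin' A) := fun y =>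
    ⟨N.mulVec y, by rw [Matrix.toLin'_apply, Matrix.mulVec_mulVec, h, Matrix.one_mulVec]⟩
  obtain ⟨e, he⟩ := exists_linearEquiv_comp_eq_of_surjective (hsurj hA) (hsurj hB)
  let U : (Module.End K (n → K))ˣ := (LinearMap.GeneralLinearGroup.generalLinearEquiv K _).symm e
  refine ⟨U.map LinearMap.toMatrixAlgEquiv'.toMonoidHom, Matrix.toLin'.injective ?_⟩
  rw [Matrix.toLin'_mul, ← he]
  exact congrArg _ (Matrix.toLin'_toMatrix' e.toLinearMap)

theorem eventually_colEquiv [NormedCommRing R] [CompleteSpace R] [Finite p] [DecidableEq p]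
    {A : Matrix p n R} {N : Matrix n p R} (hN : A * N = 1) : ∀ᶠ B in nhds A, ColEquiv A B := by
  cases nonempty_fintype p
  have hcont : Continuous fun B => (1 + N * (B - A)).det := by fun_prop
  have hA : (1 + N * (A - A)).det ∈ {x : R | IsUnit x} := by simp
  filter_upwards [hcont.continuousAt.eventually_mem (Units.isOpen.mem_nhds hA)] with B hB
  obtain ⟨U, hU⟩ := (Matrix.isUnit_iff_isUnit_det _).2 hB
  refine ⟨U, ?_⟩
  rw [hU, Matrix.mul_add, Matrix.mul_one, ← Matrix.mul_assoc, hN, Matrix.one_mul, add_sub_cancel]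

theorem colEquiv_of_preconnectedSpace [NormedCommRing R] [CompleteSpace R] [Finite p]
    [DecidableEq p] {X : Type*} [TopologicalSpace X] [PreconnectedSpace X] {A : X → Matrix p n R}
    (hA : Continuous A) (hN : ∀ x, ∃ N : Matrix n p R, A x * N = 1) (x y : X) :
    ColEquiv (A x) (A y) := by
  have : Std.Symm fun x y => ColEquiv (A x) (A y) := ⟨fun _ _ => ColEquiv.symm⟩
  refine PreconnectedSpace.induction₂ (fun x y => ColEquiv (A x) (A y)) (fun x => ?_)
    ⟨fun _ _ _ => ColEquiv.trans⟩ x y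
  obtain ⟨N, hN⟩ := hN x
  exact hA.continuousAt.eventually (eventually_colEquiv hN)

end ColEquiv

theorem exists_map_eq_of_forall_mem_range {α β m n : Type*} {f : α → β} {A : Matrix m n β}
    (hA : ∀ i j, A i j ∈ Set.range f) : ∃ A' : Matrix m n α, A'.map f = A := by
  choose A' hA' using hA
  exact ⟨.of A', Matrix.ext hA'⟩

theorem map_mul_map_eq_one {R R' m n : Type*} [Semiring R] [Semiring R'] [Fintype n]
    [DecidableEq m] {A : Matrix m n R} {N : Matrix n m R} (hN : A * N = 1) (f : R →+* R') :
    A.map f * N.map f = 1 := by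
  rw [← Matrix.map_mul, hN, Matrix.map_one f (map_zero f) (map_one f)]

/-- Every finite set of elements of `M` is positive for some real weight: a weak form of pointedness
that is stable under passing to submonoids. -/
def HasPositiveWeights (M : Type*) [AddCommMonoid M] : Prop :=
  ∀ F : Finset M, ∃ w : M →+ ℝ, ∀ μ ∈ F, μ ≠ 0 → 0 < w μ

/-- The submonoid of `0` and the elements of positive weight. -/
def positiveSubmonoid {M : Type*} [AddCommMonoid M] (w : M →+ ℝ) : AddSubmonoid M where
  carrier := {μ | μ = 0 ∨ 0 < w μ}
  zero_mem' := Or.inl rfl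
  add_mem' := by
    rintro μ ν (rfl | hμ) (rfl | hν)
    · simp
    · simpa using Or.inr hν
    · simpa using Or.inr hμ
    · exact Or.inr (by rw [map_add]; positivity)

namespace EllOne

variable {M : Type*} [AddCommMonoid M]

instance : NormOneClass (EllOne M) := ⟨norm_delta 0⟩

instance : Nontrivial (EllOne M) := NormOneClass.nontrivial

section Scale

variable {w : M →+ ℝ} (hw : ∀ μ, μ ≠ 0 → 0 < w μ)

include hw in
theorem weight_nonneg (μ : M) : 0 ≤ w μ := by
  rcases eq_or_ne μ 0 with rfl | hμ
  · rw [map_zero]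
  · exact (hw μ hμ).le

/-- The endomorphism `δ_μ ↦ s ^ w μ • δ_μ` of `ℓ¹(M)`, a homotopy from the constant term at
`s = 0` to the identity at `s = 1`. -/
def scale (s : unitInterval) : EllOne M →A[ℂ] EllOne M :=
  liftHom
    { toFun := fun μ => (((s : ℝ) ^ w μ.toAdd : ℝ) : ℂ) • delta μ.toAdd
      map_one' := by simp [one_def]
      map_mul' := fun μ ν => by
        rw [toAdd_mul, map_add, Real.rpow_add_of_nonneg s.2.1 (weight_nonneg hw _)
          (weight_nonneg hw _), Complex.ofReal_mul, smul_mul_smul_comm, delta_mul_delta] }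
    fun μ => by
      simpa [norm_smul, abs_of_nonneg (Real.rpow_nonneg s.2.1 _)] using
        Real.rpow_le_one s.2.1 s.2.2 (weight_nonneg hw μ)

theorem scale_apply (s : unitInterval) (c : EllOne M) :
    scale hw s c = ∑' μ, c μ • (((s : ℝ) ^ w μ : ℝ) : ℂ) • delta μ := rfl

theorem scale_one : scale hw 1 = ContinuousAlgHom.id ℂ (EllOne M) :=
  hom_ext fun μ => by simp [scale]

theorem scale_zero (c : EllOne M) : scale hw 0 c = algebraMap ℂ (EllOne M) (c 0) := by
  rw [scale_apply, tsum_eq_single 0 fun μ hμ => by simp [Real.zero_rpow (hw μ hμ).ne']]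
  simp [Algebra.algebraMap_eq_smul_one, one_def]

theorem map_scale_zero {m n : Type*} (A : Matrix m n (EllOne M)) :
    A.map (scale hw 0) = (A.map (· 0)).map (algebraMap ℂ (EllOne M)) :=
  Matrix.ext fun i j => scale_zero hw (A i j)

theorem continuous_scale (c : EllOne M) : Continuous fun s => scale hw s c := by
  refine continuous_tsum (fun μ => ?_) (hasSum_norm c).summable fun μ s => ?_
  · have : Continuous fun s : unitInterval => (s : ℝ) ^ w μ :=
      (Real.continuous_rpow_const (weight_nonneg hw μ)).comp continuous_subtype_val
    change Continuous fun s : unitInterval => c μ • (((s : ℝ) ^ w μ : ℝ) : ℂ) • delta μ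
    fun_prop
  · have hs : ‖(s : ℝ) ^ w μ‖ ≤ 1 := by
      rw [Real.norm_of_nonneg (Real.rpow_nonneg s.2.1 _)]
      exact Real.rpow_le_one s.2.1 s.2.2 (weight_nonneg hw μ)
    simpa [norm_smul] using mul_le_of_le_one_right (norm_nonneg (c μ)) hs

end Scale

section MapDomain

variable {N : Type*} [AddCommMonoid N]

/-- The algebra homomorphism `δ_μ ↦ δ_{f μ}` from `ℓ¹(M)` to `ℓ¹(N)`. -/
def mapDomain (f : M →+ N) : EllOne M →A[ℂ] EllOne N :=
  liftHom
    { toFun := fun μ => delta (f μ.toAdd)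
      map_one' := by simp [one_def]
      map_mul' := fun μ ν => by simp }
    fun μ => by simp

@[simp]
theorem mapDomain_delta (f : M →+ N) (μ : M) : mapDomain f (delta μ) = delta (f μ) :=
  liftHom_delta _ _ _

theorem norm_le_norm_mapDomain {f : M →+ N} (hf : Function.Injective f) (c : EllOne M) :
    ‖c‖ ≤ ‖mapDomain f c‖ := by
  classical
  let restrict : EllOne N →L[ℂ] EllOne M := lpPullback ENNReal.one_ne_top hf
  have hid : restrict.comp (mapDomain f).toContinuousLinearMap = .id ℂ (EllOne M) :=
    clm_ext fun μ => by
      change restrict (mapDomain f (delta μ)) = delta μ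
      rw [mapDomain_delta]
      unfold delta
      convert! lpPullback_single (hp := ENNReal.one_ne_top) (hg := hf) μ
  calc ‖c‖ = ‖restrict (mapDomain f c)‖ := congrArg norm congr($hid c).symm
    _ ≤ ‖mapDomain f c‖ := by simpa using restrict.le_of_opNorm_le norm_lpPullback_le _

end MapDomain

/-- The truncation of an element of `ℓ¹(M)` to a finite set of indices. -/
def truncate (s : Finset M) (c : EllOne M) : EllOne M := ∑ μ ∈ s, c μ • delta μ

theorem tendsto_map_truncate {m n : Type*} (A : Matrix m n (EllOne M)) :
    Tendsto (fun s => A.map (truncate s)) atTop (nhds A) :=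
  tendsto_pi_nhds.2 fun i => tendsto_pi_nhds.2 fun j => hasSum_delta (A i j)

theorem truncate_mem_range_mapDomain {Δ : AddSubmonoid M} {s : Finset M} (hs : ∀ μ ∈ s, μ ∈ Δ)
    (c : EllOne M) : truncate s c ∈ Set.range (mapDomain Δ.subtype) := by
  refine ⟨∑ μ : s, c μ • delta (⟨μ, hs μ μ.2⟩ : Δ), ?_⟩
  simp only [map_sum, map_smul, mapDomain_delta, truncate]
  exact Finset.sum_coe_sort s fun μ => c μ • delta μ

variable {n p : Type*} [Fintype n] [DecidableEq n] [DecidableEq p]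
  {A : Matrix p n (EllOne M)} {N : Matrix n p (EllOne M)}

theorem exists_colEquiv_algebraMap_of_weight [Finite p] {w : M →+ ℝ} (hw : ∀ μ, μ ≠ 0 → 0 < w μ)
    (hN : A * N = 1) :
    ∃ (A₀ : Matrix p n ℂ) (N₀ : Matrix n p ℂ), A₀ * N₀ = 1 ∧
      ColEquiv A (A₀.map (algebraMap ℂ (EllOne M))) := by
  have hscale (s : unitInterval) : A.map (scale hw s) * N.map (scale hw s) = 1 :=
    map_mul_map_eq_one hN (scale hw s : EllOne M →+* EllOne M)
  refine ⟨A.map (· 0), N.map (· 0),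
    Matrix.map_injective (algebraMap ℂ (EllOne M)).injective ?_, ?_⟩
  · change (A.map (· 0) * N.map (· 0)).map (algebraMap ℂ (EllOne M)) = Matrix.map 1 _
    rw [Matrix.map_mul, ← map_scale_zero hw, ← map_scale_zero hw, hscale,
      Matrix.map_one _ (map_zero _) (map_one _)]
  · have hpath := colEquiv_of_preconnectedSpace (A := fun s => A.map (scale hw s))
      (continuous_pi fun i => continuous_pi fun j => continuous_scale hw (A i j))
      (fun s => ⟨_, hscale s⟩) 1 0
    rwa [map_scale_zero, scale_one, ContinuousAlgHom.coe_id', Matrix.map_id] at hpath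

omit [DecidableEq n] in
theorem exists_mul_eq_one_of_norm_det_lt [Fintype p] {M' : Type*} [AddCommMonoid M']
    {f : M →+ M'} (hf : Function.Injective f)
    (h : ‖1 - (A.map (mapDomain f) * N.map (mapDomain f)).det‖ < 1) :
    ∃ Y : Matrix n p (EllOne M), A * Y = 1 := by
  have hmap : mapDomain f (1 - (A * N).det) =
      1 - (A.map (mapDomain f) * N.map (mapDomain f)).det := by
    rw [map_sub, map_one, ← Matrix.map_mul]
    exact congrArg (1 - ·) (RingHom.map_det (mapDomain f : EllOne M →+* EllOne M') _)
  have hdet : IsUnit (A * N).det := by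
    rw [← hmap] at h
    simpa using isUnit_one_sub_of_norm_lt_one ((norm_le_norm_mapDomain hf _).trans_lt h)
  exact ⟨N * (A * N)⁻¹, by rw [← Matrix.mul_assoc, Matrix.mul_nonsing_inv _ hdet]⟩

theorem exists_colEquiv_algebraMap [Finite p] (hM : HasPositiveWeights M) (hN : A * N = 1) :
    ∃ (A₀ : Matrix p n ℂ) (N₀ : Matrix n p ℂ), A₀ * N₀ = 1 ∧
      ColEquiv A (A₀.map (algebraMap ℂ (EllOne M))) := by
  cases nonempty_fintype p
  have hdet : ∀ᶠ s in atTop, ‖1 - (A.map (truncate s) * N.map (truncate s)).det‖ < 1 := by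
    have hcont : Continuous fun B : Matrix p n (EllOne M) × Matrix n p (EllOne M) =>
      ‖1 - (B.1 * B.2).det‖ := by fun_prop
    refine ((hcont.tendsto (A, N)).comp ((tendsto_map_truncate A).prodMk_nhds
      (tendsto_map_truncate N))).eventually_lt_const ?_
    simp [hN]
  obtain ⟨s, hs, hAs⟩ :=
    (hdet.and ((tendsto_map_truncate A).eventually (eventually_colEquiv hN))).exists
  obtain ⟨w, hw⟩ := hM s
  let Δ := positiveSubmonoid w
  have hrange := truncate_mem_range_mapDomain (Δ := Δ) fun μ hμ => or_iff_not_imp_left.2 (hw μ hμ)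
  obtain ⟨A' : Matrix p n (EllOne Δ), hA'⟩ :=
    exists_map_eq_of_forall_mem_range fun i j => hrange (A i j)
  obtain ⟨N' : Matrix n p (EllOne Δ), hN'⟩ :=
    exists_map_eq_of_forall_mem_range fun i j => hrange (N i j)
  obtain ⟨Y, hY⟩ : ∃ Y : Matrix n p (EllOne Δ), A' * Y = 1 := by
    refine exists_mul_eq_one_of_norm_det_lt (N := N') Δ.subtype_injective ?_
    rw [hA', hN']
    exact hs
  have hΔ (μ : Δ) (hμ : μ ≠ 0) : 0 < (w.comp Δ.subtype) μ :=
    μ.2.resolve_left fun h => hμ (Subtype.ext h)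
  obtain ⟨A₀, N₀, h₀, hequiv⟩ := exists_colEquiv_algebraMap_of_weight hΔ hY
  refine ⟨A₀, N₀, h₀, hAs.trans ?_⟩
  have hext := hequiv.map (mapDomain Δ.subtype : EllOne Δ →+* EllOne M)
  have hconst : (A₀.map (algebraMap ℂ (EllOne Δ))).map (mapDomain Δ.subtype) =
      A₀.map (algebraMap ℂ (EllOne M)) := Matrix.ext fun i j =>
    (mapDomain Δ.subtype : EllOne Δ →ₐ[ℂ] EllOne M).commutes (A₀ i j)
  have hA'' : A'.map (mapDomain Δ.subtype) = A.map (truncate s) := hA'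
  rw [← hconst, ← hA'']
  exact hext

theorem colEquiv_of_mul_eq_one [Finite p] (hM : HasPositiveWeights M)
    {B : Matrix p n (EllOne M)} {N' : Matrix n p (EllOne M)} (hA : A * N = 1) (hB : B * N' = 1) :
    ColEquiv A B := by
  obtain ⟨A₀, N₀, hA₀, hAA₀⟩ := exists_colEquiv_algebraMap hM hA
  obtain ⟨B₀, N₀', hB₀, hBB₀⟩ := exists_colEquiv_algebraMap hM hB
  have := (_root_.colEquiv_of_mul_eq_one hA₀ hB₀).map (algebraMap ℂ (EllOne M))
  exact (hAA₀.trans this).trans hBB₀.symm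

end EllOne

section Cone

variable {E : Type*} [AddCommGroup E] [Module ℝ E] {C : PointedCone ℝ E}

theorem convex_sdiff_singleton_zero_of_salient (hC : (C : ConvexCone ℝ E).Salient) :
    Convex ℝ ((C : Set E) \ {0}) := by
  rw [convex_iff_forall_pos]
  rintro x ⟨hx, hx0⟩ y ⟨hy, -⟩ a b ha hb -
  have hax : a • x ∈ C := C.smul_mem ha.le hx
  have hby : b • y ∈ C := C.smul_mem hb.le hy
  refine ⟨C.add_mem hax hby, fun h => hC _ hax (smul_ne_zero ha.ne' hx0) ?_⟩
  rwa [neg_eq_of_add_eq_zero_right h]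

theorem exists_strongDual_pos_of_salient [TopologicalSpace E] [IsTopologicalAddGroup E]
    [ContinuousSMul ℝ E] [LocallyConvexSpace ℝ E] [T2Space E]
    (hC : (C : ConvexCone ℝ E).Salient) {F : Set E} (hF : F.Finite) (hFC : F ⊆ C) :
    ∃ f : StrongDual ℝ E, ∀ x ∈ F, x ≠ 0 → 0 < f x := by
  have hsub : convexHull ℝ (F \ {0}) ⊆ (C : Set E) \ {0} :=
    convexHull_min (Set.sdiff_subset_sdiff_left hFC) (convex_sdiff_singleton_zero_of_salient hC)
  obtain ⟨f, u, hu, hf⟩ := geometric_hahn_banach_point_closed (convex_convexHull ℝ (F \ {0}))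
    (hF.sdiff.isClosed_convexHull ℝ) fun h => (hsub h).2 rfl
  rw [map_zero] at hu
  exact ⟨f, fun x hx hx0 => hu.trans (hf x (subset_convexHull ℝ _ ⟨hx, hx0⟩))⟩

theorem hasPositiveWeights_of_salient [TopologicalSpace E] [IsTopologicalAddGroup E]
    [ContinuousSMul ℝ E] [LocallyConvexSpace ℝ E] [T2Space E]
    (hC : (C : ConvexCone ℝ E).Salient) {M : AddSubmonoid E} (hM : (M : Set E) ⊆ C) :
    HasPositiveWeights M := fun F => by
  obtain ⟨f, hf⟩ := exists_strongDual_pos_of_salient hC (F.finite_toSet.image ((↑) : M → E))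
    (Set.image_subset_iff.2 fun μ _ => hM μ.2)
  exact ⟨(f : E →+ ℝ).comp M.subtype, fun μ hμ h0 =>
    hf μ (Set.mem_image_of_mem _ hμ) (ZeroMemClass.coe_eq_zero.not.2 h0)⟩

end Cone

section Exponential

variable {k : ℕ}

theorem apExp_apply (lam x : Fin k → ℝ) : apExp k lam x = Circle.exp (lam ⬝ᵥ x) := by
  rw [Circle.coe_exp, mul_comm]
  rfl

theorem norm_apExp_le (lam : Fin k → ℝ) : ‖apExp k lam‖ ≤ 1 :=
  (BoundedContinuousFunction.norm_le zero_le_one).2 fun x => by simp [apExp_apply]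

end Exponential

/-- The map from `ℝ^k` to the group of all maps from the frequencies `ℝ^k` to the circle whose
coordinates are the exponentials `e_λ`. -/
def bohrHom (k : ℕ) : Multiplicative (Fin k → ℝ) →* (Fin k → ℝ) → Circle where
  toFun x lam := Circle.exp (lam ⬝ᵥ x.toAdd)
  map_one' := by ext; simp
  map_mul' x y := by ext; simp [Circle.exp_add]

/-- The Bohr compactification of `ℝ^k`, realised as the closure of the range of `bohrHom`. -/
def BohrCompactification (k : ℕ) : Type := (bohrHom k).range.topologicalClosure

namespace BohrCompactification

variable {k : ℕ}

instance : CommGroup (BohrCompactification k) := by unfold BohrCompactification; infer_instance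

instance : TopologicalSpace (BohrCompactification k) := by
  unfold BohrCompactification; infer_instance

instance : IsTopologicalGroup (BohrCompactification k) := by
  unfold BohrCompactification; infer_instance

instance : T2Space (BohrCompactification k) := by unfold BohrCompactification; infer_instance

instance : CompactSpace (BohrCompactification k) :=
  isCompact_iff_compactSpace.1 (Subgroup.isClosed_topologicalClosure _).isCompact

instance : MeasurableSpace (BohrCompactification k) := borel _

instance : BorelSpace (BohrCompactification k) := ⟨rfl⟩

/-- The canonical map from `ℝ^k` to its Bohr compactification. -/
def of : C(Fin k → ℝ, BohrCompactification k) where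
  toFun x := ⟨bohrHom k (.ofAdd x), Subgroup.le_topologicalClosure _ ⟨_, rfl⟩⟩
  continuous_toFun := Continuous.subtype_mk (continuous_pi fun _ => Circle.exp.continuous.comp
    (continuous_const.dotProduct continuous_id)) _

theorem of_val (x lam : Fin k → ℝ) : (of x).val lam = Circle.exp (lam ⬝ᵥ x) := rfl

theorem denseRange_of : DenseRange (of (k := k)) := fun z => by
  refine closure_subtype.2 (closure_mono ?_ z.2)
  rintro _ ⟨x, rfl⟩
  exact ⟨of x.toAdd, ⟨_, rfl⟩, rfl⟩

theorem ext_of {F G : C(BohrCompactification k, ℂ)} (h : ∀ x, F (of x) = G (of x)) : F = G :=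
  ContinuousMap.coe_injective (denseRange_of.equalizer (map_continuous F) (map_continuous G)
    (funext h))

/-- The character of the Bohr compactification that restricts to the exponential `e_λ`. -/
def character : Multiplicative (Fin k → ℝ) →* C(BohrCompactification k, ℂ) where
  toFun lam := ⟨fun z => (z.val lam.toAdd : ℂ), continuous_subtype_val.comp
    ((continuous_apply _).comp continuous_subtype_val)⟩
  map_one' := ext_of fun x => by simp [of_val]
  map_mul' lam mu := ext_of fun x => by simp [of_val, Circle.exp_add]

theorem character_of (lam : Multiplicative (Fin k → ℝ)) (x : Fin k → ℝ) :
    character lam (of x) = apExp k lam.toAdd x :=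
  (apExp_apply _ x).symm

theorem character_mul_apply (lam : Multiplicative (Fin k → ℝ)) (y z : BohrCompactification k) :
    character lam (y * z) = character lam y * character lam z := rfl

theorem star_character (lam : Multiplicative (Fin k → ℝ)) :
    star (character lam) = character lam⁻¹ :=
  ext_of fun x => by
    rw [ContinuousMap.star_apply, character_of, character_of, apExp_apply, apExp_apply,
      Complex.star_def, ← Circle.coe_inv_eq_conj, ← Circle.exp_neg, toAdd_inv, neg_dotProduct]

theorem eq_top_of_character_mem {V : Submodule ℂ C(BohrCompactification k, ℂ)}
    (hV : IsClosed (V : Set C(BohrCompactification k, ℂ))) (h : ∀ lam, character lam ∈ V) :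
    V = ⊤ := by
  let A := StarAlgebra.adjoin ℂ (Set.range (character (k := k)))
  have hsep : A.SeparatesPoints := fun y z hyz => by
    by_contra! hA
    refine hyz (Subtype.ext (funext fun lam => Circle.ext ?_))
    exact hA _ ⟨_, StarAlgebra.subset_adjoin ℂ _ ⟨.ofAdd lam, rfl⟩, rfl⟩
  have hclosure : Submonoid.closure (Set.range (character (k := k)) ∪
      star (Set.range (character (k := k)))) ≤ MonoidHom.mrange character := by
    rw [Submonoid.closure_le, Set.union_subset_iff]
    refine ⟨fun _ h => h, ?_⟩
    rintro F ⟨lam, hF⟩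
    exact ⟨lam⁻¹, by rw [← star_character, hF, star_star]⟩
  have hAV : (A : Set C(BohrCompactification k, ℂ)) ⊆ V := fun F hF => by
    have hF' : F ∈ Subalgebra.toSubmodule A.toSubalgebra := hF
    rw [StarAlgebra.adjoin_eq_span] at hF'
    refine Submodule.span_le.2 (fun G hG => ?_) hF'
    obtain ⟨lam, rfl⟩ := hclosure hG
    exact h lam
  refine eq_top_iff.2 fun F _ => closure_minimal hAV hV ?_
  rw [← StarSubalgebra.topologicalClosure_coe,
    ContinuousMap.starSubalgebra_topologicalClosure_eq_top_of_separatesPoints A hsep]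
  trivial

/-- Restriction of continuous functions from the Bohr compactification to `ℝ^k`. -/
def restrict (k : ℕ) : C(BohrCompactification k, ℂ) →ₐ[ℂ] APB k where
  toFun F := (mkOfCompact F).compContinuous of
  map_one' := rfl
  map_mul' _ _ := rfl
  map_zero' := rfl
  map_add' _ _ := rfl
  commutes' _ := rfl

theorem restrict_character (lam : Multiplicative (Fin k → ℝ)) :
    restrict k (character lam) = apExp k lam.toAdd :=
  BoundedContinuousFunction.ext (character_of lam)

theorem norm_restrict (F : C(BohrCompactification k, ℂ)) : ‖restrict k F‖ = ‖F‖ := by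
  refine le_antisymm ((BoundedContinuousFunction.norm_le (norm_nonneg F)).2 fun x =>
    F.norm_coe_le_norm _) ((ContinuousMap.norm_le F (norm_nonneg _)).2 fun z => ?_)
  refine denseRange_of.induction_on z (isClosed_le (by fun_prop) continuous_const) fun x => ?_
  exact (restrict k F).norm_coe_le_norm x

theorem isometry_restrict : Isometry (restrict k) :=
  AddMonoidHomClass.isometry_of_norm (restrict k) norm_restrict

theorem APalg_le_range_restrict : APalg k ≤ (restrict k).range := by
  refine Subalgebra.topologicalClosure_minimal (Algebra.adjoin_le ?_) ?_
  · rintro _ ⟨lam, rfl⟩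
    exact ⟨character (.ofAdd lam), restrict_character _⟩
  · exact isometry_restrict.isClosedEmbedding.isClosed_range

/-- Normalised Haar measure on the Bohr compactification. -/
def haar (k : ℕ) : Measure (BohrCompactification k) := Measure.haarMeasure ⊤

instance : (haar k).IsHaarMeasure := by unfold haar; infer_instance

instance : IsProbabilityMeasure (haar k) := ⟨Measure.haarMeasure_self⟩

theorem integral_character (lam : Multiplicative (Fin k → ℝ)) :
    ∫ z, character lam z ∂haar k = if lam = 1 then 1 else 0 := by
  split_ifs with h
  · simp [h]
  obtain ⟨x, hx⟩ : ∃ x, character lam (of x) ≠ 1 := by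
    have h0 : lam.toAdd ⬝ᵥ lam.toAdd ≠ 0 := fun h0 => h (dotProduct_self_eq_zero.1 h0)
    refine ⟨(Real.pi / (lam.toAdd ⬝ᵥ lam.toAdd)) • lam.toAdd, ?_⟩
    rw [character_of, apExp_apply, dotProduct_smul, smul_eq_mul, div_mul_cancel₀ _ h0]
    norm_num
  have hinv := integral_mul_left_eq_self (μ := haar k) (character lam) (of x)
  simp only [character_mul_apply] at hinv
  rw [integral_const_mul] at hinv
  exact (mul_left_eq_self₀.1 hinv).resolve_left hx

theorem integrable (F : C(BohrCompactification k, ℂ)) : Integrable F (haar k) :=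
  F.continuous.integrable_of_hasCompactSupport (.of_compactSpace _)

/-- Integration against normalised Haar measure. -/
def integral (k : ℕ) : C(BohrCompactification k, ℂ) →L[ℂ] ℂ :=
  LinearMap.mkContinuous
    { toFun := fun F => ∫ z, F z ∂haar k
      map_add' := fun F G => integral_add (integrable F) (integrable G)
      map_smul' := fun c F => integral_const_mul c F } 1 fun F => by
    simpa using norm_integral_le_of_norm_le_const (μ := haar k) (.of_forall F.norm_coe_le_norm)

theorem integral_apply (F : C(BohrCompactification k, ℂ)) : integral k F = ∫ z, F z ∂haar k := rfl

theorem eq_zero_of_integral_character_mul_eq_zero {F : C(BohrCompactification k, ℂ)}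
    (h : ∀ lam, integral k (character lam * F) = 0) : F = 0 := by
  have htop := eq_top_of_character_mem
    (V := ((integral k).comp ((ContinuousLinearMap.mul ℂ _).flip F)).ker)
    (ContinuousLinearMap.isClosed_ker _) h
  have hstar : integral k (star F * F) = 0 := (htop ▸ Submodule.mem_top : star F ∈ _)
  have hsq : ∫ z, ‖F z‖ ^ 2 ∂haar k = 0 := by
    rw [integral_apply] at hstar
    have hpoint (z : BohrCompactification k) : (star F * F) z = ((‖F z‖ ^ 2 : ℝ) : ℂ) := by
      simp [← Complex.conj_mul']
    simpa only [hpoint, integral_complex_ofReal, Complex.ofReal_eq_zero] using hstar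
  by_contra hF
  obtain ⟨z, hz⟩ := DFunLike.ne_iff.1 hF
  refine hsq.not_gt (Continuous.integral_pos_of_hasCompactSupport_nonneg_nonzero (x := z)
    (by fun_prop) (.of_compactSpace _) (fun _ => by positivity) ?_)
  simpa using hz

end BohrCompactification

section Mean

variable {k : ℕ}

/-- The average of a bounded continuous function over the cube `[-T, T]^k`. -/
def boxAvg (k : ℕ) (T : ℝ) : APB k →L[ℂ] ℂ :=
  LinearMap.mkContinuous
    { toFun := fun f => (((2 * T) ^ k : ℝ) : ℂ)⁻¹ *
        ∫ x in Set.Icc (fun _ => -T : Fin k → ℝ) (fun _ => T), f x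
      map_add' := fun f g => by
        rw [← mul_add, ← integral_add f.continuous.integrableOn_Icc g.continuous.integrableOn_Icc]
        rfl
      map_smul' := fun c f => by
        rw [RingHom.id_apply, smul_eq_mul, mul_left_comm]
        exact congrArg _ (integral_const_mul c f) } 1 fun f => by
    have hvol : volume.real (Set.Icc (fun _ => -T : Fin k → ℝ) (fun _ => T)) ≤ |(2 * T) ^ k| := by
      rw [measureReal_def, Real.volume_Icc_pi, ENNReal.toReal_prod, abs_pow, ← Fin.prod_const]
      refine Finset.prod_le_prod (fun _ _ => ENNReal.toReal_nonneg) fun _ _ => ?_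
      rw [sub_neg_eq_add, ← two_mul, ENNReal.toReal_ofReal']
      exact max_le (le_abs_self _) (abs_nonneg _)
    have hint := norm_setIntegral_le_of_norm_le_const (f := f) (μ := volume)
      (isCompact_Icc (a := fun _ : Fin k => -T) (b := fun _ => T)).measure_lt_top
      fun x _ => f.norm_coe_le_norm x
    calc ‖(((2 * T) ^ k : ℝ) : ℂ)⁻¹ * ∫ x in Set.Icc (fun _ => -T) (fun _ => T), f x‖
        ≤ |(2 * T) ^ k|⁻¹ * (‖f‖ * |(2 * T) ^ k|) := by
          rw [norm_mul, norm_inv, Complex.norm_real, Real.norm_eq_abs]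
          gcongr
          exact hint.trans (by gcongr)
      _ = |(2 * T) ^ k|⁻¹ * |(2 * T) ^ k| * ‖f‖ := by ring
      _ ≤ 1 * ‖f‖ := by gcongr; exact inv_mul_le_one

theorem boxAvg_apply (T : ℝ) (f : APB k) : boxAvg k T f = (((2 * T) ^ k : ℝ) : ℂ)⁻¹ *
    ∫ x in Set.Icc (fun _ => -T : Fin k → ℝ) (fun _ => T), f x := rfl

theorem norm_boxAvg_le (T : ℝ) : ‖boxAvg k T‖ ≤ 1 :=
  LinearMap.mkContinuous_norm_le _ zero_le_one _

theorem average_exp_eq_sinc {T : ℝ} (hT : 0 < T) (a : ℝ) :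
    (2 * T : ℂ)⁻¹ * ∫ t in Set.Icc (-T) T, (Circle.exp (a * t) : ℂ) = Real.sinc (a * T) := by
  have hT' : (T : ℂ) ≠ 0 := Complex.ofReal_ne_zero.2 hT.ne'
  rw [integral_Icc_eq_integral_Ioc, ← intervalIntegral.integral_of_le (by linarith)]
  rcases eq_or_ne a 0 with rfl | ha
  · simp [← two_mul]
    field_simp
  · have ha' : (a : ℂ) ≠ 0 := Complex.ofReal_ne_zero.2 ha
    simp only [Circle.coe_exp]
    rw [intervalIntegral.integral_comp_mul_left (fun t : ℝ => Complex.exp (t * Complex.I)) ha,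
      mul_neg, integral_exp_mul_I_eq_sinc, Complex.real_smul]
    push_cast
    field_simp

theorem tendsto_sinc_const_mul_atTop (a : ℝ) :
    Tendsto (fun T => Real.sinc (a * T)) atTop (nhds (if a = 0 then 1 else 0)) := by
  split_ifs with ha
  · simp [ha]
  have hle : ∀ᶠ T in atTop, ‖Real.sinc (a * T)‖ ≤ |a|⁻¹ * T⁻¹ := by
    filter_upwards [eventually_gt_atTop 0] with T hT
    rw [Real.sinc_of_ne_zero (mul_ne_zero ha hT.ne'), norm_div, norm_mul, Real.norm_of_nonneg hT.le,
      Real.norm_eq_abs, Real.norm_eq_abs, ← mul_inv, ← one_div]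
    gcongr
    exact Real.abs_sin_le_one _
  refine squeeze_zero_norm' hle ?_
  simpa using tendsto_inv_atTop_zero.const_mul |a|⁻¹

theorem boxAvg_apExp {T : ℝ} (hT : 0 < T) (lam : Fin k → ℝ) :
    boxAvg k T (apExp k lam) = ∏ j, (Real.sinc (lam j * T) : ℂ) := by
  have hprod (x : Fin k → ℝ) : apExp k lam x = ∏ j, (Circle.exp (lam j * x j) : ℂ) := by
    simp [apExp_apply, Circle.coe_exp, dotProduct, Finset.sum_mul, Complex.exp_sum]
  simp only [← average_exp_eq_sinc hT, boxAvg_apply, hprod]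
  rw [Finset.prod_mul_distrib, Fin.prod_const, ← Set.pi_univ_Icc, volume_pi,
    Measure.restrict_pi_pi,
    integral_fintype_prod_eq_prod fun j (t : ℝ) => (Circle.exp (lam j * t) : ℂ)]
  push_cast
  rw [inv_pow]

theorem tendsto_boxAvg_apExp (lam : Fin k → ℝ) :
    Tendsto (fun T => boxAvg k T (apExp k lam)) atTop (nhds (if lam = 0 then 1 else 0)) := by
  have hsinc : Tendsto (fun T => ∏ j, (Real.sinc (lam j * T) : ℂ)) atTop
      (nhds (∏ j, ((if lam j = 0 then 1 else 0 : ℝ) : ℂ))) :=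
    tendsto_finsetProd _ fun j _ =>
      (Complex.continuous_ofReal.tendsto _).comp (tendsto_sinc_const_mul_atTop (lam j))
  have hlim : (∏ j, ((if lam j = 0 then 1 else 0 : ℝ) : ℂ)) = if lam = 0 then 1 else 0 := by
    simp only [← Complex.ofReal_prod, Finset.prod_ite_zero, Finset.prod_const_one]
    split_ifs <;> simp_all [funext_iff]
  rw [hlim] at hsinc
  exact hsinc.congr' ((eventually_gt_atTop 0).mono fun T hT => (boxAvg_apExp hT lam).symm)

namespace BohrCompactification

theorem tendsto_boxAvg_restrict (F : C(BohrCompactification k, ℂ)) :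
    Tendsto (fun T => boxAvg k T (restrict k F)) atTop (nhds (integral k F)) := by
  let V : Submodule ℂ C(BohrCompactification k, ℂ) :=
    { carrier := {F | Tendsto (fun T => boxAvg k T (restrict k F)) atTop (nhds (integral k F))}
      add_mem' := fun hF hG => by simpa using hF.add hG
      zero_mem' := by simp
      smul_mem' := fun c F hF => by simpa using hF.const_mul c }
  have hlip (T : ℝ) : LipschitzWith 1 fun F => boxAvg k T (restrict k F) := by
    simpa using! ((boxAvg k T).lipschitzWith_of_opNorm_le (norm_boxAvg_le T)).comp
      isometry_restrict.lipschitz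
  have hV : IsClosed (V : Set C(BohrCompactification k, ℂ)) :=
    (LipschitzWith.uniformEquicontinuous _ 1 hlip).equicontinuous.isClosed_setOfPred_tendsto
      (integral k).continuous
  have htop := eq_top_of_character_mem hV fun lam => by
    change Tendsto _ _ _
    rw [restrict_character, integral_apply, integral_character]
    exact tendsto_boxAvg_apExp lam.toAdd
  exact (htop ▸ Submodule.mem_top : F ∈ V)

theorem bohrCoeff_restrict (F : C(BohrCompactification k, ℂ)) (lam : Fin k → ℝ) :
    bohrCoeff k (restrict k F) lam = integral k (character (.ofAdd (-lam)) * F) := by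
  refine Tendsto.limUnder_eq ((tendsto_boxAvg_restrict _).congr fun T => ?_)
  rw [map_mul, restrict_character, boxAvg_apply]
  congr! with x
  simp [apExp_apply, Complex.exp_neg, Circle.coe_exp, dotProduct, mul_comm]

end BohrCompactification

theorem eq_of_bohrCoeff_eq {f g : APB k} (hf : f ∈ APalg k) (hg : g ∈ APalg k)
    (h : ∀ lam, bohrCoeff k f lam = bohrCoeff k g lam) : f = g := by
  obtain ⟨F, rfl⟩ := BohrCompactification.APalg_le_range_restrict hf
  obtain ⟨G, rfl⟩ := BohrCompactification.APalg_le_range_restrict hg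
  refine congrArg _ (sub_eq_zero.1 ?_)
  refine BohrCompactification.eq_zero_of_integral_character_mul_eq_zero fun lam => ?_
  simpa [BohrCompactification.bohrCoeff_restrict, mul_sub, sub_eq_zero] using h (-lam.toAdd)

section WienerAlgebra

variable {k : ℕ} (Δ : AddSubmonoid (Fin k → ℝ))

/-- The absolutely convergent exponential series with frequencies in `Δ`, as a homomorphism from
the convolution algebra of their coefficients to functions on the Bohr compactification. -/
def charSeries : EllOne Δ →A[ℂ] C(BohrCompactification k, ℂ) :=
  EllOne.liftHom (BohrCompactification.character.comp Δ.subtype.toMultiplicative) fun μ => by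
    rw [← BohrCompactification.norm_restrict, MonoidHom.comp_apply,
      BohrCompactification.restrict_character]
    exact norm_apExp_le _

/-- The absolutely convergent exponential series with frequencies in `Δ`, as a homomorphism from
the convolution algebra of their coefficients to functions on `ℝ^k`. -/
def expSeries : EllOne Δ →A[ℂ] APB k :=
  ContinuousAlgHom.comp ⟨BohrCompactification.restrict k,
    BohrCompactification.isometry_restrict.continuous⟩ (charSeries Δ)

variable {Δ}

theorem charSeries_delta (μ : Δ) :
    charSeries Δ (.delta μ) = BohrCompactification.character (.ofAdd (μ : Fin k → ℝ)) :=
  EllOne.liftHom_delta _ _ μ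

theorem expSeries_delta (μ : Δ) : expSeries Δ (.delta μ) = apExp k μ :=
  (congrArg _ (charSeries_delta μ)).trans (BohrCompactification.restrict_character _)

theorem expSeries_mem_APalg (c : EllOne Δ) : expSeries Δ c ∈ APalg k := by
  have hclosed : IsClosed (APalg k : Set (APB k)) := Subalgebra.isClosed_topologicalClosure _
  have hexp (lam : Fin k → ℝ) : apExp k lam ∈ APalg k :=
    Subalgebra.le_topologicalClosure _ (Algebra.subset_adjoin ⟨lam, rfl⟩)
  have hc : HasSum (fun μ => c μ • apExp k μ) (expSeries Δ c) := by
    simpa [expSeries_delta] using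
      (expSeries Δ).toContinuousLinearMap.hasSum (EllOne.hasSum_delta c)
  exact hclosed.mem_of_tendsto hc (Eventually.of_forall fun s =>
    (APalg k).sum_mem fun μ _ => (APalg k).smul_mem (hexp μ) _)

open Classical in
theorem hasSum_bohrCoeff_expSeries (c : EllOne Δ) (lam : Fin k → ℝ) :
    HasSum (fun μ : Δ => if (μ : Fin k → ℝ) = lam then c μ else 0)
      (bohrCoeff k (expSeries Δ c) lam) := by
  have hmean (μ : Δ) : BohrCompactification.integral k
      (BohrCompactification.character (.ofAdd (-lam)) * charSeries Δ (.delta μ)) =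
      if (μ : Fin k → ℝ) = lam then 1 else 0 := by
    rw [charSeries_delta, ← map_mul, ← ofAdd_add, BohrCompactification.integral_apply,
      BohrCompactification.integral_character]
    exact if_congr (by rw [ofAdd_eq_one, neg_add_eq_zero, eq_comm]) rfl rfl
  have hc := ((BohrCompactification.integral k).comp
    ((ContinuousLinearMap.mul ℂ _ (BohrCompactification.character (.ofAdd (-lam)))).comp
      (charSeries Δ).toContinuousLinearMap)).hasSum (EllOne.hasSum_delta c)
  convert! hc using 1
  · ext μ
    simp [-ofAdd_neg, hmean]
  · exact BohrCompactification.bohrCoeff_restrict _ _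

theorem bohrCoeff_expSeries_coe (c : EllOne Δ) (μ : Δ) :
    bohrCoeff k (expSeries Δ c) μ = c μ := by
  classical
  refine (hasSum_bohrCoeff_expSeries c μ).unique ?_
  convert! hasSum_ite_eq μ (c μ) using 2 with ν
  grind

theorem bohrCoeff_expSeries_of_notMem (c : EllOne Δ) {lam : Fin k → ℝ} (hlam : lam ∉ Δ) :
    bohrCoeff k (expSeries Δ c) lam = 0 := by
  classical
  refine (hasSum_bohrCoeff_expSeries c lam).unique ?_
  have hne (μ : Δ) : (μ : Fin k → ℝ) ≠ lam := fun h => hlam (h ▸ μ.2)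
  simpa only [if_neg (hne _)] using hasSum_zero

theorem expSeries_injective : Function.Injective (expSeries Δ) := fun c d h =>
  EllOne.ext fun μ => by rw [← bohrCoeff_expSeries_coe, h, bohrCoeff_expSeries_coe]

theorem APWmem_iff_mem_range_expSeries {f : APB k} :
    APWmem k Δ f ↔ f ∈ Set.range (expSeries Δ) := by
  constructor
  · rintro ⟨⟨hf, hspec⟩, hsum⟩
    let c : EllOne Δ :=
      .ofSummable (fun μ => bohrCoeff k f μ) (hsum.comp_injective Subtype.val_injective)
    refine ⟨c, eq_of_bohrCoeff_eq (expSeries_mem_APalg c) hf fun lam => ?_⟩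
    by_cases hlam : lam ∈ Δ
    · exact bohrCoeff_expSeries_coe c ⟨lam, hlam⟩
    · rw [(bohrCoeff_expSeries_of_notMem c hlam :)]
      exact (not_not.1 fun hne => hlam (hspec hne)).symm
  · rintro ⟨c, rfl⟩
    refine ⟨⟨expSeries_mem_APalg c, fun lam hlam => ?_⟩, ?_⟩
    · by_contra hmem
      exact hlam (bohrCoeff_expSeries_of_notMem c hmem)
    · refine (Subtype.val_injective.summable_iff fun lam hlam => ?_).1
        ((EllOne.hasSum_norm c).summable.congr fun μ => ?_)
      · refine norm_eq_zero.2 (bohrCoeff_expSeries_of_notMem c fun h => hlam ⟨⟨lam, h⟩, rfl⟩)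
      · exact congrArg norm (bohrCoeff_expSeries_coe c μ).symm

end WienerAlgebra

/-- The Hilbert space `ℓ²(ι)`. -/
abbrev EllTwo (ι : Type*) : Type _ := lp (fun _ : ι => ℂ) 2

namespace EllTwo

variable {ι ι' : Type*}

open Classical in
/-- The standard basis vector of `ℓ²(ι)` at `i`. -/
def basisVec (i : ι) : EllTwo ι := lp.single 2 i 1

open Classical in
theorem basisVec_apply (i j : ι) : basisVec i j = if j = i then 1 else 0 :=
  Pi.single_apply i (1 : ℂ) j

theorem inner_basisVec (i : ι) (f : EllTwo ι) : inner ℂ (basisVec i) f = f i := by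
  classical
  exact (lp.inner_single_left (𝕜 := ℂ) (G := fun _ : ι => ℂ) i 1 f).trans (by simp)

theorem clm_ext {E : Type*} [NormedAddCommGroup E] [NormedSpace ℂ E] {S T : EllTwo ι →L[ℂ] E}
    (h : ∀ i, S (basisVec i) = T (basisVec i)) : S = T := by
  classical
  refine lp.ext_continuousLinearMap (p := 2) ENNReal.ofNat_ne_top fun i => ?_
  ext
  exact h i

/-- Extension by zero `ℓ²(ι) → ℓ²(ι')` along an injective map `ι → ι'`. -/
def push {g : ι → ι'} (hg : Function.Injective g) : EllTwo ι →L[ℂ] EllTwo ι' :=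
  (lpPullback (p := 2) ENNReal.ofNat_ne_top hg).adjoint

theorem push_basisVec {g : ι → ι'} (hg : Function.Injective g) (i : ι) :
    push hg (basisVec i) = basisVec (g i) :=
  ext_inner_right ℂ fun f => by
    rw [push, ContinuousLinearMap.adjoint_inner_left, inner_basisVec, inner_basisVec,
      lpPullback_apply]

theorem norm_push_le {g : ι → ι'} (hg : Function.Injective g) : ‖push hg‖ ≤ 1 :=
  (LinearIsometryEquiv.norm_map ContinuousLinearMap.adjoint _).trans_le norm_lpPullback_le

variable {a M : Type*}

/-- The `i`-th component of a column of elements of `ℓ²(M)`. -/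
def component (i : a) : EllTwo (a × M) →L[ℂ] EllTwo M :=
  lpPullback (p := 2) ENNReal.ofNat_ne_top (Prod.mk_right_injective i)

theorem component_apply (i : a) (f : EllTwo (a × M)) (μ : M) : component i f μ = f (i, μ) := rfl

theorem ext_component {f g : EllTwo (a × M)} (h : ∀ i, component i f = component i g) : f = g :=
  lp.ext (funext fun q => congr($(h q.1) q.2))

theorem component_basisVec [DecidableEq a] (i j : a) (μ : M) :
    component i (basisVec (j, μ)) = if i = j then basisVec μ else 0 := by
  classical
  ext ν
  rw [component_apply, basisVec_apply]
  split_ifs with hq hij hij <;> simp_all [basisVec_apply]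

/-- The column of elements of `ℓ²(M)` whose only nonzero component is the `i`-th one. -/
def column (i : a) : EllTwo M →L[ℂ] EllTwo (a × M) := push (Prod.mk_right_injective i)

theorem column_basisVec (i : a) (μ : M) : column i (basisVec μ) = basisVec (i, μ) :=
  push_basisVec _ μ

theorem component_column [DecidableEq a] (i j : a) (f : EllTwo M) :
    component i (column j f) = if i = j then f else 0 := by
  have h : (component i).comp (column j) =
      if i = j then ContinuousLinearMap.id ℂ (EllTwo M) else 0 := clm_ext fun μ => by
    rw [ContinuousLinearMap.comp_apply, column_basisVec, component_basisVec]
    split_ifs <;> rfl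
  have := congr($h f)
  split_ifs at this ⊢ <;> exact this

end EllTwo

namespace EllOne

open EllTwo

variable {M : Type*} [AddCommMonoid M] [IsLeftCancelAdd M]

/-- The representation of `M` by shifts on `ℓ²(M)`. -/
def shift : Multiplicative M →* (EllTwo M →L[ℂ] EllTwo M) where
  toFun κ := push (add_right_injective κ.toAdd)
  map_one' := EllTwo.clm_ext fun μ => by simp [push_basisVec]
  map_mul' κ κ' := EllTwo.clm_ext fun μ => by simp [push_basisVec, add_assoc]

theorem norm_shift_le (κ : Multiplicative M) : ‖shift κ‖ ≤ 1 :=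
  norm_push_le (add_right_injective κ.toAdd)

/-- The Toeplitz operator on `ℓ²(M)` with scalar symbol in `ℓ¹(M)`. -/
def scalarToeplitz : EllOne M →A[ℂ] (EllTwo M →L[ℂ] EllTwo M) :=
  liftHom shift fun _ => norm_shift_le _

theorem scalarToeplitz_delta_basisVec (κ μ : M) :
    scalarToeplitz (delta κ) (basisVec μ) = basisVec (κ + μ) :=
  congr($(liftHom_delta shift (fun _ => norm_shift_le _) κ) _).trans (push_basisVec _ μ)

open Classical in
theorem hasSum_scalarToeplitz_basisVec (x : EllOne M) (μ ν : M) :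
    HasSum (fun κ => if κ + μ = ν then x κ else 0) (scalarToeplitz x (basisVec μ) ν) := by
  have h := ((innerSL ℂ (basisVec ν)).comp ((ContinuousLinearMap.apply ℂ (EllTwo M)
    (basisVec μ)).comp scalarToeplitz.toContinuousLinearMap)).hasSum (hasSum_delta x)
  convert! h using 1
  · ext κ
    simp [scalarToeplitz_delta_basisVec, inner_basisVec, basisVec_apply, eq_comm]
  · exact (inner_basisVec _ _).symm

variable {a b c : Type*} [Fintype a] [Fintype b] [Fintype c]

/-- The Toeplitz operator with matrix symbol `F`. -/
def toeplitz : Matrix a b (EllOne M) →+ (EllTwo (b × M) →L[ℂ] EllTwo (a × M)) where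
  toFun F := ∑ i, (column i).comp (∑ j, (scalarToeplitz (F i j)).comp (component j))
  map_zero' := by simp
  map_add' F G := by simp [ContinuousLinearMap.add_comp, Finset.sum_add_distrib]

theorem component_toeplitz (F : Matrix a b (EllOne M)) (f : EllTwo (b × M)) (i : a) :
    component i (toeplitz F f) = ∑ j, scalarToeplitz (F i j) (component j f) := by
  classical
  simp [toeplitz, component_column]

theorem toeplitz_mul (F : Matrix a b (EllOne M)) (G : Matrix b c (EllOne M)) :
    toeplitz (F * G) = (toeplitz F).comp (toeplitz G) :=
  ContinuousLinearMap.ext fun f => ext_component fun i => by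
    simp only [component_toeplitz, Matrix.mul_apply, map_sum, map_mul,
      _root_.sum_apply, ContinuousLinearMap.mul_def, ContinuousLinearMap.comp_apply]
    exact Finset.sum_comm

theorem toeplitz_one [DecidableEq a] :
    toeplitz (1 : Matrix a a (EllOne M)) = ContinuousLinearMap.id ℂ (EllTwo (a × M)) :=
  ContinuousLinearMap.ext fun f => ext_component fun i => by
    simp [component_toeplitz, Matrix.one_apply, apply_ite, ite_apply]

theorem toeplitz_basisVec_apply (F : Matrix a b (EllOne M)) (i : a) (j : b) (μ ν : M) :
    toeplitz F (basisVec (j, μ)) (i, ν) = scalarToeplitz (F i j) (basisVec μ) ν := by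
  classical
  rw [← component_apply, component_toeplitz]
  simp [component_basisVec, apply_ite]

end EllOne

section Representation

open EllTwo

variable {k : ℕ}

theorem scalarToeplitz_basisVec_eq_bohrCoeff {Δ : AddSubmonoid (Fin k → ℝ)} (x : EllOne Δ)
    (μ ν : Δ) : EllOne.scalarToeplitz x (basisVec μ) ν =
      bohrCoeff k (expSeries Δ x) ((ν : Fin k → ℝ) - μ) := by
  classical
  refine (EllOne.hasSum_scalarToeplitz_basisVec x μ ν).unique ?_
  convert! hasSum_bohrCoeff_expSeries x _ using 3 with κ
  rw [eq_sub_iff_add_eq, Subtype.ext_iff, AddSubmonoid.coe_add]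

theorem RepresentsToeplitz.eq_toeplitz {S : PointedCone ℝ (Fin k → ℝ)}
    {Lam : AddSubmonoid (Fin k → ℝ)} {m n : ℕ}
    {F : Matrix (Fin m) (Fin n) (EllOne ↥(S.toAddSubmonoid ⊓ Lam))}
    {T : BesCol k n (S ∩ Lam) →L[ℂ] BesCol k m (S ∩ Lam)}
    (hT : RepresentsToeplitz k S Lam m n (F.map (expSeries (S.toAddSubmonoid ⊓ Lam))) T) :
    T = EllOne.toeplitz F := by
  refine EllTwo.clm_ext fun ⟨j, μ⟩ => ?_
  ext ⟨i, ν⟩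
  rw [EllOne.toeplitz_basisVec_apply, scalarToeplitz_basisVec_eq_bohrCoeff]
  refine (inner_basisVec _ _).symm.trans (Eq.trans ?_ (hT j μ i ν))
  unfold basisVec
  congr!

end Representation

section Completion

open Matrix

theorem map_mul_map_add_map_mul_map_eq_one_iff {l m n F R R' : Type*} [Fintype m] [Fintype n]
    [DecidableEq l] [NonAssocSemiring R] [NonAssocSemiring R'] [FunLike F R R']
    [RingHomClass F R R'] {f : F} (hf : Function.Injective f) {A : Matrix l m R}
    {A' : Matrix m l R} {B : Matrix l n R} {B' : Matrix n l R} :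
    A.map f * A'.map f + B.map f * B'.map f = 1 ↔ A * A' + B * B' = 1 := by
  rw [← Matrix.map_mul, ← Matrix.map_mul, ← Matrix.map_add f (map_add f),
    ← Matrix.map_one f (map_zero f) (map_one f), (Matrix.map_injective hf).eq_iff]

variable {m p R : Type*} [Fintype m] [Fintype p] [DecidableEq m] [DecidableEq p] [CommRing R]

theorem ColEquiv.exists_fromBlocks_mul_eq_one {A : Matrix p m R} {B : Matrix p p R}
    (h : ColEquiv (fromCols A B) (fromCols 0 1)) :
    ∃ (X D : Matrix m m R) (Y P : Matrix m p R) (C : Matrix p m R) (Q : Matrix p p R),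
      fromBlocks X Y A B * fromBlocks D P C Q = 1 := by
  obtain ⟨U, hU⟩ := h
  have hV : fromCols A B = fromCols (0 : Matrix p m R) (1 : Matrix p p R) * U⁻¹.1 := by
    rw [← hU, Matrix.mul_assoc, Units.mul_inv, Matrix.mul_one]
  rw [← fromBlocks_toBlocks U⁻¹.1, fromCols_mul_fromBlocks, fromCols_ext_iff] at hV
  simp only [Matrix.zero_mul, Matrix.one_mul, zero_add] at hV
  refine ⟨U⁻¹.1.toBlocks₁₁, U.1.toBlocks₁₁, U⁻¹.1.toBlocks₁₂, U.1.toBlocks₁₂, U.1.toBlocks₂₁,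
    U.1.toBlocks₂₂, ?_⟩
  rw [hV.1, hV.2, fromBlocks_toBlocks, fromBlocks_toBlocks, Units.inv_mul]

theorem fromBlocks_mul_fromBlocks_eq_one_iff {X D : Matrix m m R} {Y P : Matrix m p R}
    {A C : Matrix p m R} {B Q : Matrix p p R} :
    fromBlocks X Y A (-B) * fromBlocks D P C Q = 1 ↔
      X * D + Y * C = 1 ∧ X * P + Y * Q = 0 ∧ A * D = B * C ∧ A * P = 1 + B * Q := by
  rw [fromBlocks_multiply, ← fromBlocks_one, fromBlocks_inj, Matrix.neg_mul, Matrix.neg_mul,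
    ← sub_eq_add_neg, ← sub_eq_add_neg, sub_eq_zero, sub_eq_iff_eq_add]

theorem add_mul_mul_mul_eq_one {X D : Matrix m m R} {Y : Matrix m p R} {A C : Matrix p m R}
    {B Binv : Matrix p p R} (hXY : X * D + Y * C = 1) (hAD : A * D = B * C)
    (hB : Binv * B = 1) : (X + Y * Binv * A) * D = 1 := by
  rw [Matrix.add_mul, Matrix.mul_assoc _ A, hAD, Matrix.mul_assoc Y, ← Matrix.mul_assoc Binv, hB,
    Matrix.one_mul, hXY]

end Completion

namespace EllOne

open Matrix

variable {m p M : Type*} [Fintype m] [Fintype p] [DecidableEq m] [DecidableEq p] [AddCommMonoid M]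

theorem exists_fromBlocks_mul_eq_one (hM : HasPositiveWeights M) {A : Matrix p m (EllOne M)}
    {B Y₂ : Matrix p p (EllOne M)} {Y₁ : Matrix m p (EllOne M)} (hAB : A * Y₁ + B * Y₂ = 1) :
    ∃ (X D : Matrix m m (EllOne M)) (Y P : Matrix m p (EllOne M)) (C : Matrix p m (EllOne M))
      (Q : Matrix p p (EllOne M)), fromBlocks X Y A (-B) * fromBlocks D P C Q = 1 := by
  refine ColEquiv.exists_fromBlocks_mul_eq_one (colEquiv_of_mul_eq_one hM
    (N := fromRows Y₁ (-Y₂)) (N' := fromRows 0 1) ?_ ?_)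
  · rw [fromCols_mul_fromRows, Matrix.neg_mul, Matrix.mul_neg, neg_neg, hAB]
  · rw [fromCols_mul_fromRows, Matrix.mul_zero, Matrix.one_mul, zero_add]

theorem toeplitz_eq_toeplitz_iff [IsLeftCancelAdd M] {X D : Matrix m m (EllOne M)}
    {Y P : Matrix m p (EllOne M)} {A C : Matrix p m (EllOne M)} {B Q : Matrix p p (EllOne M)}
    (h : fromBlocks X Y A (-B) * fromBlocks D P C Q = 1)
    {f : EllTwo (m × M)} {g : EllTwo (p × M)} :
    toeplitz A f = toeplitz B g ↔ ∃ h, toeplitz D h = f ∧ toeplitz C h = g := by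
  have hAD : A * D = B * C := (fromBlocks_mul_fromBlocks_eq_one_iff.1 h).2.2.1
  rw [mul_eq_one_comm, fromBlocks_multiply, ← fromBlocks_one, fromBlocks_inj] at h
  simp only [Matrix.mul_neg, ← sub_eq_add_neg] at h
  obtain ⟨hDX, hDY, hCX, hCY⟩ := h
  constructor
  · intro hfg
    refine ⟨toeplitz X f + toeplitz Y g, ?_, ?_⟩
    · calc toeplitz D (toeplitz X f + toeplitz Y g)
          = toeplitz (D * X + P * A) f + toeplitz (D * Y - P * B) g := by
            simp [map_add, map_sub, toeplitz_mul, hfg]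
        _ = f := by rw [hDX, hDY]; simp [toeplitz_one]
    · calc toeplitz C (toeplitz X f + toeplitz Y g)
          = toeplitz (C * X + Q * A) f + toeplitz (C * Y - Q * B) g := by
            simp [map_add, map_sub, toeplitz_mul, hfg]
        _ = g := by rw [hCX, hCY]; simp [toeplitz_one]
  · rintro ⟨h, rfl, rfl⟩
    simp only [← ContinuousLinearMap.comp_apply, ← toeplitz_mul, hAD]

theorem exists_coprime_factorization [IsLeftCancelAdd M] (hM : HasPositiveWeights M)
    {A : Matrix p m (EllOne M)} {B Y₂ : Matrix p p (EllOne M)} {Y₁ : Matrix m p (EllOne M)}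
    (hAB : A * Y₁ + B * Y₂ = 1) :
    ∃ (C : Matrix p m (EllOne M)) (D X : Matrix m m (EllOne M)) (Y : Matrix m p (EllOne M)),
      X * D + Y * C = 1 ∧ A * D = B * C ∧ ∀ (f : EllTwo (m × M)) (g : EllTwo (p × M)),
        toeplitz A f = toeplitz B g ↔ ∃ h, toeplitz D h = f ∧ toeplitz C h = g := by
  obtain ⟨X, D, Y, P, C, Q, h⟩ := exists_fromBlocks_mul_eq_one hM hAB
  obtain ⟨hXY, -, hAD, -⟩ := fromBlocks_mul_fromBlocks_eq_one_iff.1 h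
  exact ⟨C, D, X, Y, hXY, hAD, fun _ _ => toeplitz_eq_toeplitz_iff h⟩

end EllOne

section WienerMatrices

variable {k : ℕ} {Δ : AddSubmonoid (Fin k → ℝ)} {a b c : Type*}

theorem APWmem.mono {Δ Δ' : Set (Fin k → ℝ)} {f : APB k} (hf : APWmem k Δ f) (h : Δ ⊆ Δ') :
    APWmem k Δ' f :=
  ⟨⟨hf.1.1, hf.1.2.trans h⟩, hf.2⟩

theorem APWmem_map_expSeries (F : Matrix a b (EllOne Δ)) (i : a) (j : b) :
    APWmem k Δ (F.map (expSeries Δ) i j) :=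
  APWmem_iff_mem_range_expSeries.2 ⟨F i j, rfl⟩

theorem exists_map_expSeries_eq {F : Matrix a b (APB k)} (hF : ∀ i j, APWmem k Δ (F i j)) :
    ∃ G : Matrix a b (EllOne Δ), G.map (expSeries Δ) = F :=
  exists_map_eq_of_forall_mem_range fun i j => APWmem_iff_mem_range_expSeries.1 (hF i j)

theorem forall_APWmem_add {F G : Matrix a b (APB k)} (hF : ∀ i j, APWmem k Δ (F i j))
    (hG : ∀ i j, APWmem k Δ (G i j)) (i : a) (j : b) : APWmem k Δ ((F + G) i j) := by
  obtain ⟨F, rfl⟩ := exists_map_expSeries_eq hF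
  obtain ⟨G, rfl⟩ := exists_map_expSeries_eq hG
  rw [← Matrix.map_add _ (map_add _)]
  exact APWmem_map_expSeries _ i j

theorem forall_APWmem_mul [Fintype b] {F : Matrix a b (APB k)} {G : Matrix b c (APB k)}
    (hF : ∀ i j, APWmem k Δ (F i j)) (hG : ∀ i j, APWmem k Δ (G i j)) (i : a) (j : c) :
    APWmem k Δ ((F * G) i j) := by
  obtain ⟨F, rfl⟩ := exists_map_expSeries_eq hF
  obtain ⟨G, rfl⟩ := exists_map_expSeries_eq hG
  rw [← Matrix.map_mul]
  exact APWmem_map_expSeries _ i j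

end WienerMatrices

/-- A halfspace as a pointed convex cone. -/
def IsHalfspace.toPointedCone {k : ℕ} {S : Set (Fin k → ℝ)} (hS : IsHalfspace k S) :
    PointedCone ℝ (Fin k → ℝ) where
  carrier := S
  zero_mem' := (hS.inter.symm.subset rfl).1
  add_mem' hx hy := hS.add_mem _ hx _ hy
  smul_mem' a _ hx := hS.smul_mem _ hx a a.2

theorem IsHalfspace.salient_toPointedCone {k : ℕ} {S : Set (Fin k → ℝ)} (hS : IsHalfspace k S) :
    (hS.toPointedCone : ConvexCone ℝ (Fin k → ℝ)).Salient :=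
  (PointedCone.salient_iff_inter_neg_eq_singleton _).2 hS.inter

theorem coprime_factorization_kernel_range_general (k p m : ℕ)
    (S : PointedCone ℝ (Fin k → ℝ)) (hS : (S : ConvexCone ℝ (Fin k → ℝ)).Salient)
    (Lam : AddSubmonoid (Fin k → ℝ))
    (A : Matrix (Fin p) (Fin m) (APB k))
    (hA : ∀ i j, APWmem k ((Lam : Set (Fin k → ℝ)) ∩ S) (A i j))
    (B : Matrix (Fin p) (Fin p) (APB k))
    (hB : ∀ i j, APWmem k ((Lam : Set (Fin k → ℝ)) ∩ S) (B i j))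
    (hBinv : ∃ Binv : Matrix (Fin p) (Fin p) (APB k),
      (∀ i j, APWmem k Lam (Binv i j)) ∧ B * Binv = 1 ∧ Binv * B = 1)
    (hcoprime : ∃ (Y₁ : Matrix (Fin m) (Fin p) (APB k))
        (Y₂ : Matrix (Fin p) (Fin p) (APB k)),
      (∀ i j, APWmem k ((Lam : Set (Fin k → ℝ)) ∩ S) (Y₁ i j)) ∧
      (∀ i j, APWmem k ((Lam : Set (Fin k → ℝ)) ∩ S) (Y₂ i j)) ∧
      A * Y₁ + B * Y₂ = 1) :
    ∃ (C : Matrix (Fin p) (Fin m) (APB k)) (D : Matrix (Fin m) (Fin m) (APB k)),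
      (∀ i j, APWmem k ((Lam : Set (Fin k → ℝ)) ∩ S) (C i j)) ∧
      (∀ i j, APWmem k ((Lam : Set (Fin k → ℝ)) ∩ S) (D i j)) ∧
      (∃ Dinv : Matrix (Fin m) (Fin m) (APB k),
        (∀ i j, APWmem k Lam (Dinv i j)) ∧ D * Dinv = 1 ∧ Dinv * D = 1) ∧
      (∃ (X : Matrix (Fin m) (Fin m) (APB k)) (Y : Matrix (Fin m) (Fin p) (APB k)),
        (∀ i j, APWmem k ((Lam : Set (Fin k → ℝ)) ∩ S) (X i j)) ∧
        (∀ i j, APWmem k ((Lam : Set (Fin k → ℝ)) ∩ S) (Y i j)) ∧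
        X * D + Y * C = 1) ∧
      A * D = B * C ∧
      (∀ (TA : BesCol k m (S ∩ Lam) →L[ℂ] BesCol k p (S ∩ Lam))
         (TB : BesCol k p (S ∩ Lam) →L[ℂ] BesCol k p (S ∩ Lam))
         (TC : BesCol k m (S ∩ Lam) →L[ℂ] BesCol k p (S ∩ Lam))
         (TD : BesCol k m (S ∩ Lam) →L[ℂ] BesCol k m (S ∩ Lam)),
        RepresentsToeplitz k S Lam p m A TA →
        RepresentsToeplitz k S Lam p p B TB →
        RepresentsToeplitz k S Lam p m C TC →
        RepresentsToeplitz k S Lam m m D TD →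
        ∀ (f : BesCol k m (S ∩ Lam)) (g : BesCol k p (S ∩ Lam)),
          TA f = TB g ↔ ∃ h : BesCol k m (S ∩ Lam), TD h = f ∧ TC h = g) := by
  let Δ : AddSubmonoid (Fin k → ℝ) := S.toAddSubmonoid ⊓ Lam
  have hM : HasPositiveWeights Δ := hasPositiveWeights_of_salient hS Set.inter_subset_left
  rw [show (Lam : Set (Fin k → ℝ)) ∩ S = Δ from Set.inter_comm _ _] at hA hB hcoprime ⊢
  obtain ⟨Binv, hBinv, -, hBB⟩ := hBinv
  obtain ⟨Y₁, Y₂, hY₁, hY₂, hAB⟩ := hcoprime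
  obtain ⟨A, rfl⟩ := exists_map_expSeries_eq hA
  obtain ⟨B, rfl⟩ := exists_map_expSeries_eq hB
  obtain ⟨Y₁, rfl⟩ := exists_map_expSeries_eq hY₁
  obtain ⟨Y₂, rfl⟩ := exists_map_expSeries_eq hY₂
  rw [map_mul_map_add_map_mul_map_eq_one_iff expSeries_injective] at hAB
  obtain ⟨C, D, X, Y, hXY, hAD, hT⟩ := EllOne.exists_coprime_factorization hM hAB
  rw [← map_mul_map_add_map_mul_map_eq_one_iff (expSeries_injective (Δ := Δ))] at hXY
  replace hAD := congr($(hAD).map (expSeries Δ))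
  rw [Matrix.map_mul, Matrix.map_mul] at hAD
  have hDinv := add_mul_mul_mul_eq_one hXY hAD hBB
  have hLam {a b : Type} (F : Matrix a b (EllOne Δ)) i j :=
    (APWmem_map_expSeries F i j).mono (Set.inter_subset_right : (Δ : Set (Fin k → ℝ)) ⊆ Lam)
  refine ⟨_, _, APWmem_map_expSeries C, APWmem_map_expSeries D,
    ⟨_, ?_, mul_eq_one_comm.1 hDinv, hDinv⟩,
    ⟨_, _, APWmem_map_expSeries X, APWmem_map_expSeries Y, hXY⟩, hAD, ?_⟩
  · exact forall_APWmem_add (hLam X) (forall_APWmem_mul (forall_APWmem_mul (hLam Y) hBinv) (hLam A))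
  · intro TA TB TC TD hTA hTB hTC hTD
    rw [hTA.eq_toeplitz, hTB.eq_toeplitz, hTC.eq_toeplitz, hTD.eq_toeplitz]
    exact hT

/-- **Lemma 5.3.**  Let `S ⊂ ℝ^k` be a halfspace, `Λ'` an additive subgroup of
`ℝ^k`, `A ∈ (APW^k_{Λ'∩S})^{p×m}`, `B ∈ (APW^k_{Λ'∩S})^{p×p}` invertible in
`(APW^k_{Λ'})^{p×p}`, and suppose `(A, B)` is a left coprime pair over
`APW^k_{Λ'∩S}`.  Then (i) `W = B⁻¹A` admits a right coprime factorization
`W = C D⁻¹` over `APW^k_{Λ'∩S}` (equivalently `A D = B C`) with `D` invertible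
in `(APW^k_{Λ'})^{m×m}`; and (ii) the kernel-range identity
`Ker [T(A) −T(B)] = Im [T(D); T(C)]` holds for the corresponding Toeplitz
operators. -/
theorem coprime_factorization_kernel_range (k p m : ℕ)
    (S : Set (Fin k → ℝ)) (hS : IsHalfspace k S)
    (Lam : AddSubgroup (Fin k → ℝ))
    (A : Matrix (Fin p) (Fin m) (APB k))
    (hA : ∀ i j, APWmem k ((↑Lam : Set (Fin k → ℝ)) ∩ S) (A i j))
    (B : Matrix (Fin p) (Fin p) (APB k))
    (hB : ∀ i j, APWmem k ((↑Lam : Set (Fin k → ℝ)) ∩ S) (B i j))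
    (hBinv : ∃ Binv : Matrix (Fin p) (Fin p) (APB k),
      (∀ i j, APWmem k (↑Lam) (Binv i j)) ∧ B * Binv = 1 ∧ Binv * B = 1)
    (hcoprime : ∃ (Y₁ : Matrix (Fin m) (Fin p) (APB k))
        (Y₂ : Matrix (Fin p) (Fin p) (APB k)),
      (∀ i j, APWmem k ((↑Lam : Set (Fin k → ℝ)) ∩ S) (Y₁ i j)) ∧
      (∀ i j, APWmem k ((↑Lam : Set (Fin k → ℝ)) ∩ S) (Y₂ i j)) ∧
      A * Y₁ + B * Y₂ = 1) :
    ∃ (C : Matrix (Fin p) (Fin m) (APB k)) (D : Matrix (Fin m) (Fin m) (APB k)),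
      (∀ i j, APWmem k ((↑Lam : Set (Fin k → ℝ)) ∩ S) (C i j)) ∧
      (∀ i j, APWmem k ((↑Lam : Set (Fin k → ℝ)) ∩ S) (D i j)) ∧
      (∃ Dinv : Matrix (Fin m) (Fin m) (APB k),
        (∀ i j, APWmem k (↑Lam) (Dinv i j)) ∧ D * Dinv = 1 ∧ Dinv * D = 1) ∧
      (∃ (X : Matrix (Fin m) (Fin m) (APB k)) (Y : Matrix (Fin m) (Fin p) (APB k)),
        (∀ i j, APWmem k ((↑Lam : Set (Fin k → ℝ)) ∩ S) (X i j)) ∧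
        (∀ i j, APWmem k ((↑Lam : Set (Fin k → ℝ)) ∩ S) (Y i j)) ∧
        X * D + Y * C = 1) ∧
      A * D = B * C ∧
      (∀ (TA : BesCol k m (S ∩ ↑Lam) →L[ℂ] BesCol k p (S ∩ ↑Lam))
         (TB : BesCol k p (S ∩ ↑Lam) →L[ℂ] BesCol k p (S ∩ ↑Lam))
         (TC : BesCol k m (S ∩ ↑Lam) →L[ℂ] BesCol k p (S ∩ ↑Lam))
         (TD : BesCol k m (S ∩ ↑Lam) →L[ℂ] BesCol k m (S ∩ ↑Lam)),
        RepresentsToeplitz k S (↑Lam) p m A TA →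
        RepresentsToeplitz k S (↑Lam) p p B TB →
        RepresentsToeplitz k S (↑Lam) p m C TC →
        RepresentsToeplitz k S (↑Lam) m m D TD →
        ∀ (f : BesCol k m (S ∩ ↑Lam)) (g : BesCol k p (S ∩ ↑Lam)),
          TA f = TB g ↔ ∃ h : BesCol k m (S ∩ ↑Lam), TD h = f ∧ TC h = g) :=
  coprime_factorization_kernel_range_general k p m hS.toPointedCone hS.salient_toPointedCone
    Lam.toAddSubmonoid A hA B hB hBinv hcoprime
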